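/- Let R be a one-dimensional Cohen-Macaulay local ring with minimal multiplicity. Then A = R ⋉ R has minimal multiplicity as a ring if and only if R is a regular local ring. -/

import Mathlib

/-! Write `𝔪` and `𝔐` for the maximal ideals of `R` and of `A = R ⋉ R`. Then `𝔐ⁿ⁺¹ = 𝔪ⁿ⁺¹ ⊕ 𝔪ⁿ`
(`mem_maximalIdeal_idealization_pow`), so that `ℓ(A/𝔐ⁿ⁺¹) = ℓ(R/𝔪ⁿ) + ℓ(R/𝔪ⁿ⁺¹)`
(`length_idealization`). Taking eventual differences shows that the multiplicity of `A` is `2 e(R)`,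
while the case `n = 1`, combined with `ℓ(R/𝔪²) = embdim R + 1` (`length_quotient_sq`), gives
`embdim A = embdim R + 1`. If `e(R) = embdim R = v`, then `A` has minimal multiplicity iff
`2 v = v + 1`, i.e. iff `v = 1 = dim R`, which is regularity of `R`.

Since `v ≥ dim R = 1`, the hypothesis `e(R) = v` makes `e(R)` nonzero, so it is a genuine eventual
difference of lengths and not the default value of `hsMult`.
-/


open IsLocalRing Filter

section Defs

variable (R : Type*) [CommRing R]

/-- The length of an `R`-module `M`: the Krull dimension of its lattice of submodules. -/
noncomputable def mlen (M : Type*) [AddCommGroup M] [Module R M] : WithBot ℕ∞ :=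
  Order.krullDim (Submodule R M)

/-- The minimal number of generators of an `R`-module. -/
noncomputable def mu (M : Type*) [AddCommGroup M] [Module R M] : ℕ :=
  sInf {n | ∃ s : Finset M, s.card = n ∧ Submodule.span R (s : Set M) = ⊤}

/-- The Hilbert–Samuel multiplicity `e_R(I, M)` of a finitely generated module over a
one-dimensional local ring with respect to an `m`-primary ideal `I`: the eventual value of
`ℓ(M/I^{n+1}M) - ℓ(M/I^n M)`. -/
noncomputable def hsMult (I : Ideal R) (M : Type*) [AddCommGroup M] [Module R M] : ℕ∞ := by
  classical
  exact if h : ∃ e : ℕ∞, ∀ᶠ n in atTop,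
      mlen R (M ⧸ (I ^ (n + 1) • (⊤ : Submodule R M))) =
        mlen R (M ⧸ (I ^ n • (⊤ : Submodule R M))) + (e : WithBot ℕ∞)
    then h.choose else 0

/-- The length of the subquotient `P/Q` for submodules `Q ⊆ P` of `M`. -/
noncomputable def qlen {M : Type*} [AddCommGroup M] [Module R M]
    (P Q : Submodule R M) : WithBot ℕ∞ :=
  mlen R (↥P ⧸ Q.comap P.subtype)

/-- `(x)` is a minimal reduction of `I` (one-dimensional situation): a principal subideal with
`I^{n+1} = x I^n` for all large `n`. -/
def IsMinimalReduction (I : Ideal R) (x : R) : Prop :=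
  x ∈ I ∧ ∃ N : ℕ, ∀ n ≥ N, I ^ (n + 1) = Ideal.span {x} * I ^ n

/-- A module is torsion-free if non zero-divisors of `R` act injectively. -/
def TorsionFree (M : Type*) [AddCommGroup M] [Module R M] : Prop :=
  ∀ r ∈ nonZeroDivisors R, ∀ m : M, r • m = 0 → m = 0

/-- The embedding dimension of a local ring: the minimal number of generators of the
maximal ideal. -/
noncomputable def embdim (R : Type*) [CommRing R] [IsLocalRing R] : ℕ :=
  sInf {n | ∃ s : Finset R, s.card = n ∧ Ideal.span (s : Set R) = maximalIdeal R}

/-- A Noetherian local ring is regular iff its embedding dimension equals its Krull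
dimension. -/
def IsRegularLocal (R : Type*) [CommRing R] [IsLocalRing R] : Prop :=
  ((embdim R : ℕ∞) : WithBot ℕ∞) = ringKrullDim R

/-- The colon `(J :_Q K)` of two `R`-submodules of an `R`-algebra `Q`. -/
def colonQ {Q : Type*} [CommRing Q] [Algebra R Q] (J K : Submodule R Q) : Submodule R Q where
  carrier := {q | ∀ k ∈ K, q * k ∈ J}
  add_mem' := by
    intro a b ha hb k hk
    simpa [add_mul] using J.add_mem (ha k hk) (hb k hk)
  zero_mem' := by intro k hk; rw [zero_mul]; exact J.zero_mem
  smul_mem' := by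
    intro c a ha k hk
    simpa [smul_mul_assoc] using J.smul_mem c (ha k hk)

end Defs

/-- `mlen` is Mathlib's `Module.length`, cast to `WithBot ℕ∞`. -/
lemma mlen_eq_length (R : Type*) [CommRing R] (M : Type*) [AddCommGroup M] [Module R M] :
    mlen R M = (Module.length R M : WithBot ℕ∞) :=
  (Module.coe_length R M).symm

/-- The defining property of `hsMult R I R` in terms of `Module.length`. -/
lemma hsMult_prop_iff (R : Type*) [CommRing R] (I : Ideal R) (e : ℕ∞) :
    (∀ᶠ n in atTop, mlen R (R ⧸ (I ^ (n + 1) • (⊤ : Submodule R R))) =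
        mlen R (R ⧸ (I ^ n • (⊤ : Submodule R R))) + (e : WithBot ℕ∞)) ↔
    ∀ᶠ n in atTop, Module.length R (R ⧸ I ^ (n + 1)) = Module.length R (R ⧸ I ^ n) + e := by
  have h (n : ℕ) : Module.length R (R ⧸ (I ^ n • (⊤ : Submodule R R))) =
      Module.length R (R ⧸ I ^ n) := by
    rw [show I ^ n • (⊤ : Submodule R R) = I ^ n from Ideal.mul_top _]
  simp only [mlen_eq_length, h, ← WithBot.coe_add, WithBot.coe_inj]

/-- A nonzero `hsMult` is not the default value, so the eventual difference does exist. -/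
lemma hsMult_spec (R : Type*) [CommRing R] (I : Ideal R) (h0 : hsMult R I R ≠ 0) :
    ∀ᶠ n in atTop, Module.length R (R ⧸ I ^ (n + 1)) =
      Module.length R (R ⧸ I ^ n) + hsMult R I R := by
  classical
  rw [← hsMult_prop_iff]
  unfold hsMult at h0 ⊢
  split_ifs at h0 ⊢ with h
  · exact h.choose_spec
  · exact absurd rfl h0

/-- Finiteness of the lengths makes the eventual difference unique. -/
lemma hsMult_eq (R : Type*) [CommRing R] (I : Ideal R) (e : ℕ∞)
    (hfin : ∀ n, Module.length R (R ⧸ I ^ n) ≠ ⊤)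
    (he : ∀ᶠ n in atTop, Module.length R (R ⧸ I ^ (n + 1)) =
      Module.length R (R ⧸ I ^ n) + e) :
    hsMult R I R = e := by
  classical
  have hex := (hsMult_prop_iff R I e).2 he
  have h' : ∀ᶠ n in atTop, Module.length R (R ⧸ I ^ (n + 1)) =
      Module.length R (R ⧸ I ^ n) + hsMult R I R := by
    rw [← hsMult_prop_iff]
    unfold hsMult
    rw [dif_pos ⟨e, hex⟩]
    exact (⟨e, hex⟩ : ∃ e : ℕ∞, ∀ᶠ n in atTop,
      mlen R (R ⧸ (I ^ (n + 1) • (⊤ : Submodule R R))) =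
        mlen R (R ⧸ (I ^ n • (⊤ : Submodule R R))) + (e : WithBot ℕ∞)).choose_spec
  obtain ⟨n, h1, h2⟩ := (h'.and he).exists
  rw [h1] at h2
  exact (ENat.add_right_injective_of_ne_top (hfin n)) h2

lemma embdim_eq_spanFinrank (R : Type*) [CommRing R] [IsLocalRing R] [IsNoetherianRing R] :
    embdim R = (maximalIdeal R).spanFinrank := by
  apply le_antisymm
  · obtain ⟨s, hs, h⟩ := Submodule.FG.exists_span_finset_card_eq_spanFinrank
      (maximalIdeal R).fg_of_isNoetherianRing
    exact Nat.sInf_le ⟨s, hs, h⟩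
  · obtain ⟨s, hs, h⟩ := Submodule.FG.exists_span_finset_card_eq_spanFinrank
      (maximalIdeal R).fg_of_isNoetherianRing
    refine le_csInf ⟨_, s, hs, h⟩ ?_
    rintro n ⟨t, rfl, ht⟩
    have := Submodule.spanFinrank_span_le_ncard_of_finite (R := R) t.finite_toSet
    rw [Set.ncard_coe_finset] at this
    rw [← ht]
    exact this

/-- By Nakayama, the embedding dimension is the length of `𝔪/𝔪²`. -/
lemma length_quotient_sq (R : Type*) [CommRing R] [IsLocalRing R] [IsNoetherianRing R] :
    Module.length R (R ⧸ maximalIdeal R ^ 2) = (embdim R : ℕ∞) + 1 := by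
  have hc : Module.length R (maximalIdeal R).Cotangent = (embdim R : ℕ∞) := by
    rw [embdim_eq_spanFinrank, spanFinrank_maximalIdeal_eq_finrank_cotangentSpace,
      ← Module.length_eq_finrank]
    exact Module.length_eq_of_surjective (S := R) (R := ResidueField R)
      (M := CotangentSpace R) residue_surjective
  have hk : Module.length R (R ⧸ maximalIdeal R) = 1 := by
    rw [Module.length_eq_one_iff, isSimpleModule_iff_isCoatom]
    exact Ideal.isMaximal_def.1 inferInstance
  have hle : maximalIdeal R ^ 2 ≤ maximalIdeal R := Ideal.pow_le_self two_ne_zero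
  rw [← hc, ← hk]
  refine Module.length_eq_add_of_exact (maximalIdeal R).cotangentToQuotientSquare
    (Submodule.factor hle) ?_ (Submodule.factor_surjective hle) ?_
  · exact (maximalIdeal R).cotangentToQuotientSquare_injective
  · rw [LinearMap.exact_iff, Ideal.range_cotangentToQuotientSquare, Submodule.factor, Submodule.ker_mapQ]
    rfl

/-- `R/𝔪ⁿ` is Artinian, since its maximal ideal is nilpotent. -/
lemma length_quotient_pow_ne_top (R : Type*) [CommRing R] [IsLocalRing R] [IsNoetherianRing R]
    (n : ℕ) : Module.length R (R ⧸ maximalIdeal R ^ n) ≠ ⊤ := by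
  rcases n with _ | n
  · have : Subsingleton (R ⧸ maximalIdeal R ^ 0) := by
      rw [pow_zero]; exact Ideal.Quotient.subsingleton_iff.2 Ideal.one_eq_top
    simp
  · have hne : maximalIdeal R ^ (n + 1) ≠ ⊤ := fun h =>
      (maximalIdeal.isMaximal R).ne_top (top_le_iff.1 (h ▸ Ideal.pow_le_self n.succ_ne_zero))
    have : Nontrivial (R ⧸ maximalIdeal R ^ (n + 1)) := Ideal.Quotient.nontrivial_iff.2 hne
    have : IsLocalRing (R ⧸ maximalIdeal R ^ (n + 1)) :=
      .of_surjective' _ Ideal.Quotient.mk_surjective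
    have : IsArtinianRing (R ⧸ maximalIdeal R ^ (n + 1)) := by
      rw [isArtinianRing_iff_isNilpotent_maximalIdeal]
      refine ⟨n + 1, ?_⟩
      have hle : maximalIdeal (R ⧸ maximalIdeal R ^ (n + 1)) ≤
          (maximalIdeal R).map (Ideal.Quotient.mk (maximalIdeal R ^ (n + 1))) := by
        intro y hy
        obtain ⟨x, rfl⟩ := Ideal.Quotient.mk_surjective y
        exact Ideal.mem_map_of_mem _ fun hx => hy (hx.map _)
      refine le_bot_iff.1 ((Ideal.pow_right_mono hle _).trans ?_)
      rw [← Ideal.map_pow, Ideal.map_quotient_self]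
    rw [Module.length_eq_of_surjective (S := R) (R := R ⧸ maximalIdeal R ^ (n + 1))
      Ideal.Quotient.mk_surjective]
    exact Module.length_ne_top

section Idealization

variable (R : Type*) [CommRing R]

attribute [local instance] TrivSqZeroExt.algebraBase

lemma isNoetherianRing_idealization [IsNoetherianRing R] :
    IsNoetherianRing (TrivSqZeroExt R R) :=
  have : IsNoetherian R (TrivSqZeroExt R R) := inferInstanceAs (IsNoetherian R (R × R))
  isNoetherian_of_tower R this

lemma mem_maximalIdeal_idealization [IsLocalRing R] [IsLocalRing (TrivSqZeroExt R R)]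
    (x : TrivSqZeroExt R R) :
    x ∈ maximalIdeal (TrivSqZeroExt R R) ↔ x.fst ∈ maximalIdeal R := by
  simp [mem_maximalIdeal, mem_nonunits_iff, TrivSqZeroExt.isUnit_iff_isUnit_fst]

/-- The maximal ideal `𝔐` of `R ⋉ R` satisfies `𝔐ⁿ⁺¹ = 𝔪ⁿ⁺¹ ⊕ 𝔪ⁿ`. -/
lemma mem_maximalIdeal_idealization_pow [IsLocalRing R] [IsLocalRing (TrivSqZeroExt R R)]
    (n : ℕ) (x : TrivSqZeroExt R R) :
    x ∈ maximalIdeal (TrivSqZeroExt R R) ^ (n + 1) ↔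
      x.fst ∈ maximalIdeal R ^ (n + 1) ∧ x.snd ∈ maximalIdeal R ^ n := by
  constructor
  · induction n generalizing x with
    | zero =>
      intro hx
      rw [zero_add, pow_one, mem_maximalIdeal_idealization] at hx
      simpa using hx
    | succ n ih =>
      intro hx
      rw [pow_succ] at hx
      induction hx using Submodule.mul_induction_on' with
      | mem_mul_mem a ha b hb =>
        obtain ⟨h1, h2⟩ := ih a ha
        rw [mem_maximalIdeal_idealization] at hb
        refine ⟨?_, ?_⟩
        · rw [TrivSqZeroExt.fst_mul, pow_succ]
          exact Ideal.mul_mem_mul h1 hb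
        · rw [TrivSqZeroExt.snd_mul]
          refine Ideal.add_mem _ (Ideal.mul_mem_right _ _ h1) ?_
          rw [pow_succ, op_smul_eq_smul, smul_eq_mul, mul_comm b.fst]
          exact Ideal.mul_mem_mul h2 hb
      | add a _ b _ ha hb => exact ⟨Ideal.add_mem _ ha.1 hb.1, Ideal.add_mem _ ha.2 hb.2⟩
  · rintro ⟨h1, h2⟩
    have hmap : (maximalIdeal R).map (TrivSqZeroExt.inlHom R R) ≤
        maximalIdeal (TrivSqZeroExt R R) := by
      rw [Ideal.map_le_iff_le_comap]
      intro r hr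
      rw [Ideal.mem_comap, mem_maximalIdeal_idealization]
      exact hr
    have hinl (k : ℕ) (r : R) (hr : r ∈ maximalIdeal R ^ k) :
        (TrivSqZeroExt.inl r : TrivSqZeroExt R R) ∈ maximalIdeal (TrivSqZeroExt R R) ^ k := by
      refine Ideal.pow_right_mono hmap k ?_
      rw [← Ideal.map_pow]
      exact Ideal.mem_map_of_mem _ hr
    rw [← TrivSqZeroExt.inl_fst_add_inr_snd_eq x]
    refine Ideal.add_mem _ (hinl _ _ h1) ?_
    have : (TrivSqZeroExt.inr x.snd : TrivSqZeroExt R R) =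
        TrivSqZeroExt.inl x.snd * TrivSqZeroExt.inr 1 := by
      ext <;> simp only [TrivSqZeroExt.fst_inr, TrivSqZeroExt.fst_mul, TrivSqZeroExt.snd_inr,
        TrivSqZeroExt.snd_mul, TrivSqZeroExt.fst_inl, TrivSqZeroExt.snd_inl] <;> simp
    rw [this, pow_succ]
    refine Ideal.mul_mem_mul (hinl _ _ h2) ?_
    rw [mem_maximalIdeal_idealization]
    exact Ideal.zero_mem _

/-- Additivity of length along `0 → R/𝔪ⁿ → A/𝔐ⁿ⁺¹ → R/𝔪ⁿ⁺¹ → 0`, where `A = R ⋉ R` acts on `R`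
through the first projection. -/
lemma length_idealization [IsLocalRing R] [IsLocalRing (TrivSqZeroExt R R)] (n : ℕ) :
    Module.length (TrivSqZeroExt R R)
        (TrivSqZeroExt R R ⧸ maximalIdeal (TrivSqZeroExt R R) ^ (n + 1)) =
      Module.length R (R ⧸ maximalIdeal R ^ n) +
        Module.length R (R ⧸ maximalIdeal R ^ (n + 1)) := by
  have hsurj : Function.Surjective (algebraMap (TrivSqZeroExt R R) R) :=
    fun r => ⟨TrivSqZeroExt.inl r, rfl⟩
  have hsmul (a : TrivSqZeroExt R R) (r : R) : a • r = a.fst * r := rfl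
  rw [← Module.length_eq_of_surjective (M := R ⧸ maximalIdeal R ^ n) hsurj,
    ← Module.length_eq_of_surjective (M := R ⧸ maximalIdeal R ^ (n + 1)) hsurj]
  let i : R →ₗ[TrivSqZeroExt R R] TrivSqZeroExt R R :=
    { toFun := TrivSqZeroExt.inr
      map_add' := TrivSqZeroExt.inr_add R
      map_smul' := fun a r => by ext <;> simp [hsmul, mul_comm] }
  let p : TrivSqZeroExt R R →ₗ[TrivSqZeroExt R R] R := Algebra.linearMap _ _
  let I : Submodule (TrivSqZeroExt R R) R := (maximalIdeal R ^ n).restrictScalars _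
  let J : Submodule (TrivSqZeroExt R R) R := (maximalIdeal R ^ (n + 1)).restrictScalars _
  have hi : I = Submodule.comap i (maximalIdeal (TrivSqZeroExt R R) ^ (n + 1)) := by
    ext r
    rw [Submodule.mem_comap, mem_maximalIdeal_idealization_pow]
    exact ⟨fun h => ⟨Ideal.zero_mem _, h⟩, fun h => h.2⟩
  have hp : maximalIdeal (TrivSqZeroExt R R) ^ (n + 1) ≤ J.comap p := fun x hx =>
    ((mem_maximalIdeal_idealization_pow R n x).1 hx).1
  refine Module.length_eq_add_of_exact (N := R ⧸ I) (P := R ⧸ J)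
    (Submodule.mapQ I _ i hi.le) (Submodule.mapQ _ J p hp) ?_ ?_ ?_
  · intro y z hyz
    obtain ⟨y, rfl⟩ := Submodule.Quotient.mk_surjective I y
    obtain ⟨z, rfl⟩ := Submodule.Quotient.mk_surjective I z
    refine (Submodule.Quotient.eq I).2 ?_
    rw [hi, Submodule.mem_comap, map_sub]
    exact (Submodule.Quotient.eq _).1 hyz
  · rintro y
    obtain ⟨r, rfl⟩ := Submodule.Quotient.mk_surjective J y
    exact ⟨Submodule.Quotient.mk (TrivSqZeroExt.inl r), rfl⟩
  · intro y
    obtain ⟨x, rfl⟩ := Submodule.Quotient.mk_surjective _ y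
    constructor
    · intro hx
      have hx' : x.fst ∈ maximalIdeal R ^ (n + 1) := (Submodule.Quotient.mk_eq_zero J).1 hx
      refine ⟨Submodule.Quotient.mk x.snd, (Submodule.Quotient.eq _).2 ?_⟩
      rw [mem_maximalIdeal_idealization_pow]
      simp [i, hx']
    · rintro ⟨z, hz⟩
      obtain ⟨r, rfl⟩ := Submodule.Quotient.mk_surjective I z
      rw [← hz]
      exact (Submodule.Quotient.mk_eq_zero J).2 (Ideal.zero_mem _)

end Idealization

/-- Compare the lengths of `A/𝔐²` and `R/𝔪²` through `length_idealization`. -/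
lemma embdim_idealization (R : Type*) [CommRing R] [IsLocalRing R] [IsNoetherianRing R]
    [IsLocalRing (TrivSqZeroExt R R)] : embdim (TrivSqZeroExt R R) = embdim R + 1 := by
  have := isNoetherianRing_idealization R
  have h := length_idealization R 1
  have hk : Module.length R (R ⧸ maximalIdeal R ^ 1) = 1 := by
    rw [pow_one, Module.length_eq_one_iff, isSimpleModule_iff_isCoatom]
    exact Ideal.isMaximal_def.1 inferInstance
  rw [one_add_one_eq_two, length_quotient_sq, length_quotient_sq, hk] at h
  norm_cast at h
  omega

/-- if `R` has minimal multiplicity, then `A = R ⋉ R` has minimal multiplicity as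
a ring iff `R` is a regular local ring. -/
theorem stmt9 (R : Type*) [CommRing R] [IsLocalRing R] [IsNoetherianRing R]
    [Infinite (ResidueField R)]
    (hdim : ringKrullDim R = 1)
    (hCM : ∃ r ∈ maximalIdeal R, r ∈ nonZeroDivisors R)
    (hmm : hsMult R (maximalIdeal R) R = (embdim R : ℕ∞))
    [IsLocalRing (TrivSqZeroExt R R)] :
    hsMult (TrivSqZeroExt R R) (maximalIdeal (TrivSqZeroExt R R)) (TrivSqZeroExt R R) =
        (embdim (TrivSqZeroExt R R) : ℕ∞) ↔
      IsRegularLocal R := by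
  have hnoeth := isNoetherianRing_idealization R
  have hpos : 1 ≤ embdim R := by
    have := ringKrullDim_le_spanFinrank_maximalIdeal R
    rw [hdim, ← embdim_eq_spanFinrank] at this
    exact_mod_cast this
  have hv := hsMult_spec R (maximalIdeal R) (by
    rw [hmm]
    exact_mod_cast (by omega : embdim R ≠ 0))
  rw [hmm] at hv
  have hA : hsMult (TrivSqZeroExt R R) (maximalIdeal (TrivSqZeroExt R R)) (TrivSqZeroExt R R) =
      ((embdim R + embdim R : ℕ) : ℕ∞) := by
    refine hsMult_eq _ _ _ (length_quotient_pow_ne_top _) ?_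
    obtain ⟨N, hN⟩ := eventually_atTop.1 hv
    refine eventually_atTop.2 ⟨N + 1, fun n hn => ?_⟩
    obtain ⟨n, rfl⟩ : ∃ k, n = k + 1 := ⟨n - 1, by omega⟩
    rw [length_idealization, length_idealization, hN (n + 1) (by omega), hN n (by omega)]
    push_cast
    ring
  rw [hA, embdim_idealization, IsRegularLocal, hdim]
  norm_cast
  omega
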